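/- Let X_1, …, X_n be upper extended negatively dependent random variables in a sub-linear expectation space with dominating constant K ≥ 1 and 𝔼[X_k] ≤ 0 for each k. Set S_n = Σ_{k=1}^n X_k, B_n = Σ_{k=1}^n 𝔼[X_k²] and M_{n,p,+} = Σ_{k=1}^n 𝔼[(X_k⁺)^p]. Then for any p ≥ 2 there exists a constant C_p ≥ 1 depending only on p such that for all x > 0 and 0 < δ ≤ 1: 𝕍(S_n ≥ x) ≤ C_p·δ^{−2p}·K·M_{n,p,+}/x^p + K·exp{ −x²/(2·B_n·(1+δ)) }. -/

import Mathlib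

open Filter MeasureTheory
open scoped ENNReal NNReal

noncomputable section

/-- A sub-linear expectation on `Ω`: a monotone, constant-preserving, sub-additive,
positively homogeneous functional on real random variables (with values in the
extended reals, so that random variables without a finite expectation are allowed). -/
structure SublinearExp (Ω : Type) where
  E : (Ω → ℝ) → EReal
  mono : ∀ X Y : Ω → ℝ, (∀ ω, X ω ≤ Y ω) → E X ≤ E Y
  const_eq : ∀ c : ℝ, E (fun _ => c) = (c : EReal)
  subadd : ∀ X Y : Ω → ℝ, E (fun ω => X ω + Y ω) ≤ E X + E Y
  pos_homog : ∀ lam : ℝ, 0 ≤ lam → ∀ X : Ω → ℝ,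
    E (fun ω => lam * X ω) = (lam : EReal) * E X

namespace SublinearExp

variable {Ω : Type}

/-- The conjugate expectation `ℰ[X] := −𝔼[−X]`. -/
def cE (SL : SublinearExp Ω) (X : Ω → ℝ) : EReal := - SL.E fun ω => - X ω

/-- The upper capacity `𝕍(A) := inf{𝔼[ξ] : 1_A ≤ ξ}`. -/
def V (SL : SublinearExp Ω) (A : Set Ω) : ℝ :=
  sInf {x : ℝ | ∃ ξ : Ω → ℝ,
    (∀ ω, A.indicator (fun _ => (1 : ℝ)) ω ≤ ξ ω) ∧ SL.E ξ = (x : EReal)}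

/-- The lower capacity `𝓋(A) := 1 − 𝕍(Aᶜ)`. -/
def vLow (SL : SublinearExp Ω) (A : Set Ω) : ℝ := 1 - SL.V Aᶜ

/-- The Choquet integral `C_𝕍(X) := ∫₀^∞ 𝕍(X ≥ t) dt` (of a non-negative r.v.). -/
def Choquet (SL : SublinearExp Ω) (X : Ω → ℝ) : ℝ≥0∞ :=
  ∫⁻ t in Set.Ioi (0 : ℝ), ENNReal.ofReal (SL.V {ω | t ≤ X ω})

/-- The outer capacity `𝕍*(A) := inf{Σ_n 𝕍(A_n) : A ⊆ ∪_n A_n}`. -/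
def Vout (SL : SublinearExp Ω) (A : Set Ω) : ℝ≥0∞ :=
  ⨅ (B : ℕ → Set Ω) (_ : A ⊆ ⋃ n, B n), ∑' n, ENNReal.ofReal (SL.V (B n))

/-- The upper capacity is continuous: continuous from below and from above. -/
def ContinuousCapacity (SL : SublinearExp Ω) : Prop :=
  (∀ A : ℕ → Set Ω, Monotone A →
    Tendsto (fun n => SL.V (A n)) atTop (nhds (SL.V (⋃ n, A n)))) ∧
  (∀ A : ℕ → Set Ω, Antitone A →
    Tendsto (fun n => SL.V (A n)) atTop (nhds (SL.V (⋂ n, A n))))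

/-- Bounded Lipschitz function on ℝ. -/
def IsBLip (g : ℝ → ℝ) : Prop :=
  (∃ L : NNReal, LipschitzWith L g) ∧ ∃ M : ℝ, ∀ x, |g x| ≤ M

/-- Local Lipschitz function on ℝ: `|φ(x) − φ(y)| ≤ C(1+|x|^m+|y|^m)|x−y|`. -/
def IsLocLip (φ : ℝ → ℝ) : Prop :=
  ∃ (C : ℝ) (m : ℕ), ∀ x y : ℝ, |φ x - φ y| ≤ C * (1 + |x| ^ m + |y| ^ m) * |x - y|

/-- Upper extended negative dependence (finite family) with dominating constant `K`:
`𝔼[∏ g_i(X_i)] ≤ K ∏ 𝔼[g_i(X_i)]` for all non-negative bounded Lipschitz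
non-decreasing `g_i`.  (Expectations of bounded functions are finite, whence
the `toReal`.) -/
def UENDFin (SL : SublinearExp Ω) (K : ℝ) {n : ℕ} (X : Fin n → Ω → ℝ) : Prop :=
  ∀ g : Fin n → ℝ → ℝ, (∀ i, IsBLip (g i)) → (∀ i, Monotone (g i)) →
    (∀ i x, 0 ≤ g i x) →
    SL.E (fun ω => ∏ i, g i (X i ω)) ≤
      ((K * ∏ i, (SL.E fun ω => g i (X i ω)).toReal : ℝ) : EReal)

/-- Upper extended negative dependence for a sequence. -/
def UEND (SL : SublinearExp Ω) (K : ℝ) (X : ℕ → Ω → ℝ) : Prop :=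
  ∀ n : ℕ, ∀ g : ℕ → ℝ → ℝ, (∀ i, IsBLip (g i)) → (∀ i, Monotone (g i)) →
    (∀ i x, 0 ≤ g i x) →
    SL.E (fun ω => ∏ i ∈ Finset.range n, g i (X i ω)) ≤
      ((K * ∏ i ∈ Finset.range n, (SL.E fun ω => g i (X i ω)).toReal : ℝ) : EReal)

/-- Lower extended negative dependence for a sequence. -/
def LEND (SL : SublinearExp Ω) (K : ℝ) (X : ℕ → Ω → ℝ) : Prop :=
  ∀ n : ℕ, ∀ g : ℕ → ℝ → ℝ, (∀ i, IsBLip (g i)) → (∀ i, Antitone (g i)) →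
    (∀ i x, 0 ≤ g i x) →
    SL.E (fun ω => ∏ i ∈ Finset.range n, g i (X i ω)) ≤
      ((K * ∏ i ∈ Finset.range n, (SL.E fun ω => g i (X i ω)).toReal : ℝ) : EReal)

/-- Extended negative dependence = upper and lower END. -/
def END (SL : SublinearExp Ω) (K : ℝ) (X : ℕ → Ω → ℝ) : Prop :=
  UEND SL K X ∧ LEND SL K X

/-- Upper extended negative dependence under the conjugate expectation `ℰ`
(finite family). -/
def UENDFinConj (SL : SublinearExp Ω) (K : ℝ) {n : ℕ} (X : Fin n → Ω → ℝ) : Prop :=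
  ∀ g : Fin n → ℝ → ℝ, (∀ i, IsBLip (g i)) → (∀ i, Monotone (g i)) →
    (∀ i x, 0 ≤ g i x) →
    SL.cE (fun ω => ∏ i, g i (X i ω)) ≤
      ((K * ∏ i, (SL.cE fun ω => g i (X i ω)).toReal : ℝ) : EReal)

/-- Upper extended negative dependence under the conjugate expectation (sequence). -/
def UENDconj (SL : SublinearExp Ω) (K : ℝ) (X : ℕ → Ω → ℝ) : Prop :=
  ∀ n : ℕ, ∀ g : ℕ → ℝ → ℝ, (∀ i, IsBLip (g i)) → (∀ i, Monotone (g i)) →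
    (∀ i x, 0 ≤ g i x) →
    SL.cE (fun ω => ∏ i ∈ Finset.range n, g i (X i ω)) ≤
      ((K * ∏ i ∈ Finset.range n, (SL.cE fun ω => g i (X i ω)).toReal : ℝ) : EReal)

/-- Lower extended negative dependence under the conjugate expectation (sequence). -/
def LENDconj (SL : SublinearExp Ω) (K : ℝ) (X : ℕ → Ω → ℝ) : Prop :=
  ∀ n : ℕ, ∀ g : ℕ → ℝ → ℝ, (∀ i, IsBLip (g i)) → (∀ i, Antitone (g i)) →
    (∀ i x, 0 ≤ g i x) →
    SL.cE (fun ω => ∏ i ∈ Finset.range n, g i (X i ω)) ≤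
      ((K * ∏ i ∈ Finset.range n, (SL.cE fun ω => g i (X i ω)).toReal : ℝ) : EReal)

/-- Extended negative dependence under the conjugate expectation. -/
def ENDconj (SL : SublinearExp Ω) (K : ℝ) (X : ℕ → Ω → ℝ) : Prop :=
  UENDconj SL K X ∧ LENDconj SL K X

/-- Extended independence of a sequence:
`𝔼[∏ ψ_i(X_i)] = ∏ 𝔼[ψ_i(X_i)]` for non-negative local Lipschitz `ψ_i`,
whenever the expectations involved are finite. -/
def ExtIndep (SL : SublinearExp Ω) (X : ℕ → Ω → ℝ) : Prop :=
  ∀ n : ℕ, ∀ ψ : ℕ → ℝ → ℝ, (∀ i, IsLocLip (ψ i)) → (∀ i x, 0 ≤ ψ i x) →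
    (∀ i ∈ Finset.range n, SL.E (fun ω => ψ i (X i ω)) ≠ ⊤) →
    SL.E (fun ω => ∏ i ∈ Finset.range n, ψ i (X i ω)) =
      ((∏ i ∈ Finset.range n, (SL.E fun ω => ψ i (X i ω)).toReal : ℝ) : EReal)

/-- Extended independence of two random variables. -/
def ExtIndepPair (SL : SublinearExp Ω) (Y Z : Ω → ℝ) : Prop :=
  ∀ ψ₁ ψ₂ : ℝ → ℝ, IsLocLip ψ₁ → IsLocLip ψ₂ →
    (∀ x, 0 ≤ ψ₁ x) → (∀ x, 0 ≤ ψ₂ x) →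
    SL.E (fun ω => ψ₁ (Y ω)) ≠ ⊤ → SL.E (fun ω => ψ₂ (Z ω)) ≠ ⊤ →
    SL.E (fun ω => ψ₁ (Y ω) * ψ₂ (Z ω)) =
      (((SL.E fun ω => ψ₁ (Y ω)).toReal * (SL.E fun ω => ψ₂ (Z ω)).toReal : ℝ) : EReal)

/-- Identically distributed: `𝔼[φ(X_i)] = 𝔼[φ(X_1)]` for all local Lipschitz `φ`. -/
def IdentDist (SL : SublinearExp Ω) (X : ℕ → Ω → ℝ) : Prop :=
  ∀ (i : ℕ) (φ : ℝ → ℝ), IsLocLip φ →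
    SL.E (fun ω => φ (X i ω)) = SL.E fun ω => φ (X 0 ω)

end SublinearExp

/-- `log x = ln(x ∨ e)`. -/
def paperLog (x : ℝ) : ℝ := Real.log (max x (Real.exp 1))

/-- `a_n = √(2 n log log n)` with the above convention for `log`. -/
def lilA (n : ℕ) : ℝ := Real.sqrt (2 * n * paperLog (paperLog n))

/-- On `(-∞, δ/2]` the exponential stays below its second-order Taylor polynomial with the
quadratic term inflated by `1 + δ`. -/
theorem Real.exp_le_inflated_quadratic {δ s : ℝ} (hδ : 0 ≤ δ) (hδ1 : δ ≤ 1) (hs : s ≤ δ / 2) :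
    Real.exp s ≤ 1 + s + (1 + δ) / 2 * s ^ 2 := by
  rcases le_total s 0 with h | h
  · have h1 := Real.quadratic_le_exp_of_nonneg (neg_nonneg.2 h)
    have h2 : Real.exp s * Real.exp (-s) = 1 := by rw [← Real.exp_add]; simp
    have h3 : Real.exp s ≤ 1 + s + s ^ 2 / 2 := by
      have hpos := Real.exp_pos s
      have h4 : Real.exp s * (1 + -s + (-s) ^ 2 / 2) ≤ 1 :=
        (mul_le_mul_of_nonneg_left h1 hpos.le).trans_eq h2
      have h5 : 0 < 1 + -s + (-s) ^ 2 / 2 := by nlinarith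
      refine le_of_mul_le_mul_right (h4.trans ?_) h5
      nlinarith [sq_nonneg (s ^ 2)]
    nlinarith [sq_nonneg s]
  · have h1 := Real.exp_bound' h (by linarith) (n := 3) (by norm_num)
    norm_num [Finset.sum_range_succ, Nat.factorial] at h1
    have : s ^ 3 ≤ δ / 2 * s ^ 2 := by
      rw [pow_succ']; exact mul_le_mul_of_nonneg_right hs (sq_nonneg s)
    nlinarith [pow_nonneg h 3]

/-- On `[η, σ]` the exponential is dominated by multiples of `s ^ p` normalized at the
endpoints. -/
theorem Real.exp_le_rpow_endpoints {p η s σ : ℝ} (hp : 0 ≤ p) (hη : 0 < η) (hs : η ≤ s)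
    (hσ : s ≤ σ) :
    Real.exp s ≤ Real.exp p * (s / η) ^ p + Real.exp σ * (s / σ) ^ p := by
  have hs0 : 0 < s := hη.trans_le hs
  have hσ0 : 0 < σ := hs0.trans_le hσ
  rcases le_total s p with h | h
  · have h1 : 1 ≤ (s / η) ^ p := Real.one_le_rpow ((one_le_div hη).2 hs) hp
    have h2 : 0 ≤ Real.exp σ * (s / σ) ^ p := by positivity
    have h3 := Real.exp_le_exp.2 h
    nlinarith [Real.exp_pos p]
  · have h1 : (σ / s) ^ p ≤ Real.exp (σ - s) := by
      have h2 : σ / s ≤ Real.exp ((σ - s) / s) := by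
        have := Real.add_one_le_exp ((σ - s) / s)
        rwa [sub_div, div_self hs0.ne', sub_add_cancel, ← div_self hs0.ne', ← sub_div] at this
      calc (σ / s) ^ p ≤ Real.exp ((σ - s) / s) ^ p :=
            Real.rpow_le_rpow (by positivity) h2 hp
        _ = Real.exp ((σ - s) / s * p) := (Real.exp_mul _ _).symm
        _ ≤ Real.exp (σ - s) := by
            refine Real.exp_le_exp.2 ?_
            rw [div_mul_eq_mul_div, div_le_iff₀ hs0]
            exact mul_le_mul_of_nonneg_left h (by linarith)
    have h3 : Real.exp s ≤ Real.exp σ * (s / σ) ^ p := by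
      have h4 : (s / σ) ^ p * (σ / s) ^ p = 1 := by
        rw [← Real.mul_rpow (by positivity) (by positivity), div_mul_div_cancel₀ hσ0.ne',
          div_self hs0.ne', Real.one_rpow]
      calc Real.exp s = Real.exp s * ((s / σ) ^ p * (σ / s) ^ p) := by rw [h4, mul_one]
        _ ≤ Real.exp s * ((s / σ) ^ p * Real.exp (σ - s)) := by gcongr
        _ = Real.exp σ * (s / σ) ^ p := by
            rw [Real.exp_sub]; field_simp
    have : 0 ≤ Real.exp p * (s / η) ^ p := by positivity
    linarith

theorem Real.exp_mul_min_le {p δ t y u : ℝ} (hp : 0 ≤ p) (hδ : 0 < δ) (hδ1 : δ ≤ 1)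
    (ht : 0 < t) (hy : 0 < y) :
    Real.exp (t * min u y) ≤ 1 + t * u + (1 + δ) / 2 * t ^ 2 * u ^ 2 +
      (Real.exp p * (t / (δ / 2)) ^ p + Real.exp (t * y) / y ^ p) * (max u 0) ^ p := by
  set A := Real.exp p * (t / (δ / 2)) ^ p + Real.exp (t * y) / y ^ p with hA
  have hA0 : 0 ≤ A := by positivity
  have hu0 : 0 ≤ (max u 0) ^ p := Real.rpow_nonneg (le_max_right _ _) _
  have hvu : min u y ≤ u := min_le_left _ _
  have htv : t * min u y ≤ t * u := mul_le_mul_of_nonneg_left hvu ht.le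
  rcases le_total (t * min u y) (δ / 2) with h | h
  · have h1 := Real.exp_le_inflated_quadratic hδ.le hδ1 h
    have h2 : (min u y) ^ 2 ≤ u ^ 2 := by
      rcases le_total u y with h' | h'
      · rw [min_eq_left h']
      · rw [min_eq_right h']; nlinarith
    have h3 : (1 + δ) / 2 * (t * min u y) ^ 2 ≤ (1 + δ) / 2 * t ^ 2 * u ^ 2 := by
      rw [mul_pow, ← mul_assoc]; gcongr
    have := mul_nonneg hA0 hu0
    linarith
  · have hv : 0 < min u y := by
      by_contra hc
      nlinarith [mul_nonneg ht.le (neg_nonneg.2 (not_lt.1 hc))]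
    have h1 := Real.exp_le_rpow_endpoints hp (half_pos hδ) h
      (mul_le_mul_of_nonneg_left (min_le_right u y) ht.le)
    have h2 : Real.exp p * (t * min u y / (δ / 2)) ^ p +
        Real.exp (t * y) * (t * min u y / (t * y)) ^ p = A * (min u y) ^ p := by
      rw [mul_div_mul_left _ _ ht.ne', mul_div_right_comm, Real.mul_rpow (by positivity) hv.le,
        Real.div_rpow hv.le hy.le, hA]
      ring
    have h3 : A * (min u y) ^ p ≤ A * (max u 0) ^ p := by
      gcongr
      exact hvu.trans (le_max_left _ _)
    have : 0 ≤ (1 + δ) / 2 * t ^ 2 * u ^ 2 := by positivity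
    have : 0 < t * u := (mul_pos ht hv).trans_le htv
    linarith

theorem Real.rpow_le_mul_exp_div_four {p L : ℝ} (hp : 0 < p) (hL : 0 ≤ L) :
    L ^ p ≤ (4 * p) ^ p * Real.exp (L / 4) := by
  have h : L ≤ 4 * p * Real.exp (L / (4 * p)) := by
    have h1 := Real.add_one_le_exp (L / (4 * p))
    calc L = 4 * p * (L / (4 * p)) := by field_simp
      _ ≤ _ := by gcongr; linarith
  calc L ^ p ≤ (4 * p * Real.exp (L / (4 * p))) ^ p := Real.rpow_le_rpow hL h hp.le
    _ = _ := by
      rw [Real.mul_rpow (by positivity) (Real.exp_pos _).le, ← Real.exp_mul]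
      congr 2
      field_simp

theorem EReal.coe_sum_real {ι : Type*} (s : Finset ι) (f : ι → ℝ) :
    ((∑ i ∈ s, f i : ℝ) : EReal) = ∑ i ∈ s, (f i : EReal) :=
  map_sum (⟨⟨Real.toEReal, EReal.coe_zero⟩, EReal.coe_add⟩ : ℝ →+ EReal) f s

/-- If finitely many non-negative extended reals have a real sum, they are all real. -/
theorem EReal.exists_real_of_sum_eq_coe {ι : Type*} {s : Finset ι} {f : ι → EReal} {c : ℝ}
    (hf : ∀ i ∈ s, 0 ≤ f i) (hc : (c : EReal) = ∑ i ∈ s, f i) :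
    ∃ b : ι → ℝ, (∀ i ∈ s, f i = (b i : EReal)) ∧ (∀ i ∈ s, 0 ≤ b i) ∧ c = ∑ i ∈ s, b i := by
  have h : ∀ i ∈ s, f i = ((f i).toReal : EReal) := fun i hi => by
    refine (EReal.coe_toReal (fun htop => ?_) (fun hbot => ?_)).symm
    · have := Finset.single_le_sum hf hi
      rw [← hc, htop] at this
      exact absurd this (not_le.2 (EReal.coe_lt_top c))
    · have := hf i hi
      rw [hbot] at this
      simp at this
  refine ⟨fun i => (f i).toReal, h, fun i hi => EReal.toReal_nonneg (hf i hi), ?_⟩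
  rw [Finset.sum_congr rfl h, ← EReal.coe_sum_real] at hc
  exact_mod_cast hc

namespace SublinearExp

variable {Ω : Type} (SL : SublinearExp Ω)

theorem E_nonneg {X : Ω → ℝ} (h : ∀ ω, 0 ≤ X ω) : 0 ≤ SL.E X := by
  simpa [SL.const_eq 0] using SL.mono (fun _ => 0) X h

theorem V_le {A : Set Ω} {ξ : Ω → ℝ} {r : ℝ}
    (hξ : ∀ ω, A.indicator (fun _ => (1 : ℝ)) ω ≤ ξ ω) (hr : SL.E ξ ≤ (r : EReal)) :
    SL.V A ≤ r := by
  have nonneg : ∀ ζ : Ω → ℝ, (∀ ω, A.indicator (fun _ => (1 : ℝ)) ω ≤ ζ ω) → 0 ≤ SL.E ζ :=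
    fun ζ hζ => SL.E_nonneg fun ω =>
      (Set.indicator_nonneg (fun _ _ => zero_le_one) ω).trans (hζ ω)
  have h0 := nonneg ξ hξ
  have hfin : SL.E ξ = ((SL.E ξ).toReal : EReal) := by
    refine (EReal.coe_toReal (fun h => ?_) (fun h => ?_)).symm
    · rw [h] at hr
      exact absurd hr (not_le.2 (EReal.coe_lt_top r))
    · rw [h] at h0
      simp at h0
  refine csInf_le_of_le (b := (SL.E ξ).toReal) ⟨0, ?_⟩ ⟨ξ, hξ, hfin⟩ ?_
  · rintro z ⟨ζ, hζ, hz⟩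
    have := nonneg ζ hζ
    rw [hz] at this
    exact_mod_cast this
  · rw [hfin] at hr
    exact_mod_cast hr

theorem V_le_one (A : Set Ω) : SL.V A ≤ 1 :=
  SL.V_le (ξ := fun _ => 1)
    (fun ω => Set.indicator_le_self' (fun _ _ => zero_le_one) ω) (SL.const_eq 1).le

theorem E_const_mul_le {X : Ω → ℝ} {a b : ℝ} (ha : 0 ≤ a) (h : SL.E X ≤ (b : EReal)) :
    SL.E (fun ω => a * X ω) ≤ ((a * b : ℝ) : EReal) := by
  rw [SL.pos_homog a ha, EReal.coe_mul]
  exact mul_le_mul_of_nonneg_left h (by exact_mod_cast ha)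

theorem E_add_le {X Y : Ω → ℝ} {a b : ℝ} (hX : SL.E X ≤ (a : EReal))
    (hY : SL.E Y ≤ (b : EReal)) :
    SL.E (fun ω => X ω + Y ω) ≤ ((a + b : ℝ) : EReal) := by
  rw [EReal.coe_add]
  exact (SL.subadd X Y).trans (add_le_add hX hY)

theorem E_sum_le {ι : Type*} (s : Finset ι) {X : ι → Ω → ℝ} {a : ι → ℝ}
    (h : ∀ i ∈ s, SL.E (X i) ≤ (a i : EReal)) :
    SL.E (fun ω => ∑ i ∈ s, X i ω) ≤ ((∑ i ∈ s, a i : ℝ) : EReal) := by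
  classical
  induction s using Finset.induction_on with
  | empty => simpa using (SL.const_eq 0).le
  | insert i s hi ih =>
    simp only [Finset.sum_insert hi]
    exact SL.E_add_le (h i (Finset.mem_insert_self i s))
      (ih fun j hj => h j (Finset.mem_insert_of_mem hj))

theorem isBLip_exp_mul_min {t : ℝ} (ht : 0 ≤ t) (y : ℝ) :
    IsBLip fun u => Real.exp (t * min u y) := by
  have hle : ∀ u, t * min u y ≤ t * y := fun u =>
    mul_le_mul_of_nonneg_left (min_le_right u y) ht
  refine ⟨⟨⟨Real.exp (t * y) * t, by positivity⟩, LipschitzWith.of_le_add_mul _ fun u v => ?_⟩,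
    Real.exp (t * y), fun u => ?_⟩
  · have h1 := Real.add_one_le_exp (t * min v y - t * min u y)
    have h2 : Real.exp (t * min u y) * Real.exp (t * min v y - t * min u y) =
        Real.exp (t * min v y) := by
      rw [← Real.exp_add]; congr 1; ring
    have h3 : t * min u y - t * min v y ≤ t * dist u v := by
      rw [← mul_sub]
      refine mul_le_mul_of_nonneg_left ?_ ht
      exact (le_abs_self _).trans (abs_min_sub_min_le_max u y v y |>.trans (by
        simp [Real.dist_eq]))
    have h4 : Real.exp (t * min u y) * (t * min u y - t * min v y) ≤
        Real.exp (t * y) * (t * dist u v) :=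
      (mul_le_mul_of_nonneg_left h3 (Real.exp_pos _).le).trans
        (mul_le_mul_of_nonneg_right (Real.exp_le_exp.2 (hle u)) (by positivity))
    change _ ≤ _ + Real.exp (t * y) * t * dist u v
    have h5 := mul_le_mul_of_nonneg_left h1 (Real.exp_pos (t * min u y)).le
    rw [h2] at h5
    linarith
  · rw [abs_of_pos (Real.exp_pos _)]
    exact Real.exp_le_exp.2 (hle u)

theorem E_exp_mul_min_le {p δ t y b m : ℝ} (hp : 0 ≤ p) (hδ : 0 < δ) (hδ1 : δ ≤ 1)
    (ht : 0 < t) (hy : 0 < y) {X : Ω → ℝ} (hX : SL.E X ≤ 0)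
    (hb : SL.E (fun ω => X ω ^ 2) ≤ (b : EReal))
    (hm : SL.E (fun ω => (max (X ω) 0) ^ p) ≤ (m : EReal)) :
    SL.E (fun ω => Real.exp (t * min (X ω) y)) ≤ ((1 + (1 + δ) / 2 * t ^ 2 * b +
      (Real.exp p * (t / (δ / 2)) ^ p + Real.exp (t * y) / y ^ p) * m : ℝ) : EReal) := by
  refine (SL.mono _ _ fun ω => Real.exp_mul_min_le hp hδ hδ1 ht hy).trans ?_
  have h := SL.E_add_le (SL.E_add_le (SL.E_add_le (SL.const_eq 1).le
    (SL.E_const_mul_le ht.le (b := 0) (by simpa using hX)))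
    (SL.E_const_mul_le (a := (1 + δ) / 2 * t ^ 2) (by positivity) hb))
    (SL.E_const_mul_le
      (a := Real.exp p * (t / (δ / 2)) ^ p + Real.exp (t * y) / y ^ p) (by positivity) hm)
  simpa only [mul_zero, add_zero] using h

/-- Truncated exponential (Fuk–Nagaev type) inequality with free parameters `t` and `y`. -/
theorem V_sum_ge_le {p δ t y K B M : ℝ} (hp : 0 ≤ p) (hδ : 0 < δ) (hδ1 : δ ≤ 1)
    (ht : 0 < t) (hy : 0 < y) (hK : 0 ≤ K) {n : ℕ} {X : Fin n → Ω → ℝ}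
    (hU : SL.UENDFin K X) (hX : ∀ k, SL.E (X k) ≤ 0) {b m : Fin n → ℝ}
    (hb : ∀ k, SL.E (fun ω => X k ω ^ 2) ≤ (b k : EReal))
    (hm : ∀ k, SL.E (fun ω => (max (X k ω) 0) ^ p) ≤ (m k : EReal))
    (hB : B = ∑ k, b k) (hM : M = ∑ k, m k) (x : ℝ) :
    SL.V {ω | x ≤ ∑ k, X k ω} ≤ M / y ^ p + K * Real.exp (-(t * x) + ((1 + δ) / 2 * t ^ 2 * B +
      (Real.exp p * (t / (δ / 2)) ^ p + Real.exp (t * y) / y ^ p) * M)) := by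
  set A := Real.exp p * (t / (δ / 2)) ^ p + Real.exp (t * y) / y ^ p with hA
  set g : ℝ → ℝ := fun u => Real.exp (t * min u y) with hg
  have hg0 : ∀ u, 0 < g u := fun u => Real.exp_pos _
  refine SL.V_le (ξ := fun ω => (y ^ p)⁻¹ * (∑ k, (max (X k ω) 0) ^ p) +
    Real.exp (-(t * x)) * ∏ k, g (X k ω)) (fun ω => ?_) ?_
  · have hs0 : ∀ k, 0 ≤ (max (X k ω) 0) ^ p := fun k =>
      Real.rpow_nonneg (le_max_right _ _) _
    have hS0 : 0 ≤ (y ^ p)⁻¹ * ∑ k, (max (X k ω) 0) ^ p :=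
      mul_nonneg (by positivity) (Finset.sum_nonneg fun k _ => hs0 k)
    have hP0 : 0 ≤ Real.exp (-(t * x)) * ∏ k, g (X k ω) :=
      mul_nonneg (Real.exp_pos _).le (Finset.prod_nonneg fun k _ => (hg0 _).le)
    refine Set.indicator_apply_le' (fun hω => ?_) (fun _ => add_nonneg hS0 hP0)
    by_cases hc : ∃ k, y < X k ω
    · obtain ⟨k, hk⟩ := hc
      have h1 : y ^ p ≤ ∑ k, (max (X k ω) 0) ^ p :=
        (Real.rpow_le_rpow hy.le (hk.le.trans (le_max_left _ _)) hp).trans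
          (Finset.single_le_sum (f := fun k => (max (X k ω) 0) ^ p)
            (fun j _ => hs0 j) (Finset.mem_univ k))
      have h2 : 1 ≤ (y ^ p)⁻¹ * ∑ k, (max (X k ω) 0) ^ p := by
        rw [inv_mul_eq_div]
        exact (one_le_div (by positivity)).2 h1
      linarith
    · push Not at hc
      have h1 : ∏ k, g (X k ω) = Real.exp (t * ∑ k, X k ω) := by
        rw [Finset.mul_sum, Real.exp_sum]
        exact Finset.prod_congr rfl fun k _ => by rw [hg]; simp only [min_eq_left (hc k)]
      have h2 : 1 ≤ Real.exp (-(t * x)) * ∏ k, g (X k ω) := by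
        rw [h1, ← Real.exp_add]
        refine Real.one_le_exp ?_
        have : t * x ≤ t * ∑ k, X k ω := mul_le_mul_of_nonneg_left hω ht.le
        linarith
      linarith
  · have hprod : ∏ k, (SL.E fun ω => g (X k ω)).toReal ≤
        Real.exp ((1 + δ) / 2 * t ^ 2 * B + A * M) := by
      rw [hB, hM, Finset.mul_sum, Finset.mul_sum, ← Finset.sum_add_distrib, Real.exp_sum]
      refine Finset.prod_le_prod
        (fun k _ => EReal.toReal_nonneg (SL.E_nonneg fun ω => (hg0 _).le)) fun k _ => ?_
      have h1 := SL.E_exp_mul_min_le hp hδ hδ1 ht hy (hX k) (hb k) (hm k)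
      have h2 := EReal.toReal_le_toReal h1
        (ne_bot_of_le_ne_bot EReal.zero_ne_bot (SL.E_nonneg fun ω => (hg0 (X k ω)).le))
        (EReal.coe_ne_top _)
      rw [EReal.toReal_coe, ← hA] at h2
      refine h2.trans ?_
      have := Real.add_one_le_exp ((1 + δ) / 2 * t ^ 2 * b k + A * m k)
      linarith
    have hE : SL.E (fun ω => ∏ k, g (X k ω)) ≤
        ((K * Real.exp ((1 + δ) / 2 * t ^ 2 * B + A * M) : ℝ) : EReal) := by
      refine (hU (fun _ => g) (fun _ => isBLip_exp_mul_min ht.le y) (fun _ u v huv => ?_)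
        (fun _ u => (hg0 u).le)).trans ?_
      · exact Real.exp_le_exp.2 (mul_le_mul_of_nonneg_left (min_le_min_right y huv) ht.le)
      · exact_mod_cast mul_le_mul_of_nonneg_left hprod hK
    have h := SL.E_add_le
      (SL.E_const_mul_le (a := (y ^ p)⁻¹) (by positivity)
        (SL.E_sum_le Finset.univ fun k _ => hm k))
      (SL.E_const_mul_le (a := Real.exp (-(t * x))) (Real.exp_pos _).le hE)
    refine h.trans (le_of_eq ?_)
    rw [← hM, Real.exp_add (-(t * x)), inv_mul_eq_div]
    congr 1
    ring

end SublinearExp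

/-- The remainder in the truncated exponential inequality, in terms of `m = M / x ^ p` and
`L = t * x` with truncation level `x / 4`. -/
theorem Real.truncation_remainder_le {p δ m L : ℝ} (hp : 0 < p) (hδ : 0 < δ) (hδ1 : δ ≤ 1)
    (hm : 0 ≤ m) (hL : 0 ≤ L) :
    (Real.exp p * (L / (δ / 2)) ^ p + Real.exp (L / 4) * 4 ^ p) * m ≤
      (Real.exp p * (8 * p) ^ p + 4 ^ p) * δ ^ (-p) * (m * Real.exp (L / 4)) := by
  have h1 : (L / (δ / 2)) ^ p ≤ (8 * p) ^ p * δ ^ (-p) * Real.exp (L / 4) := by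
    have e1 : L / (δ / 2) = 2 * L * δ⁻¹ := by field_simp
    have e2 : 8 * p = 2 * (4 * p) := by ring
    rw [e1, e2, Real.mul_rpow (by positivity) (by positivity), Real.inv_rpow hδ.le,
      ← Real.rpow_neg hδ.le, Real.mul_rpow (by norm_num) hL,
      Real.mul_rpow (by norm_num) (by positivity)]
    have h := Real.rpow_le_mul_exp_div_four hp hL
    calc (2 : ℝ) ^ p * L ^ p * δ ^ (-p)
        ≤ 2 ^ p * ((4 * p) ^ p * Real.exp (L / 4)) * δ ^ (-p) := by gcongr
      _ = _ := by ring
  have h2 : 1 ≤ δ ^ (-p) := Real.one_le_rpow_of_pos_of_le_one_of_nonpos hδ hδ1 (by linarith)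
  calc (Real.exp p * (L / (δ / 2)) ^ p + Real.exp (L / 4) * 4 ^ p) * m
      ≤ (Real.exp p * ((8 * p) ^ p * δ ^ (-p) * Real.exp (L / 4)) +
          Real.exp (L / 4) * 4 ^ p * δ ^ (-p)) * m := by
        gcongr ?_ * m
        exact add_le_add (by gcongr) (le_mul_of_one_le_right (by positivity) h2)
    _ = _ := by ring

/-- Optimization over `t`: a tail `V` bounded by the truncated exponential inequality for every
`t > 0` obeys the moment/exponential bound. -/
theorem Real.le_of_forall_truncated_exp_bound {p δ K B M x V : ℝ} (hp : 0 < p) (hδ : 0 < δ)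
    (hδ1 : δ ≤ 1) (hK : 1 ≤ K) (hB : 0 ≤ B) (hM : 0 ≤ M) (hx : 0 < x) (hV : V ≤ 1)
    (h : ∀ t, 0 < t → V ≤ M / (x / 4) ^ p +
      K * Real.exp (-(t * x) + ((1 + δ) / 2 * t ^ 2 * B +
        (Real.exp p * (t / (δ / 2)) ^ p + Real.exp (t * (x / 4)) / (x / 4) ^ p) * M))) :
    V ≤ (4 ^ p + ((Real.exp p * (8 * p) ^ p + 4 ^ p) + 1) *
        Real.exp (Real.exp p * (8 * p) ^ p + 4 ^ p)) * δ ^ (-(2 * p)) * K * (M / x ^ p) +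
      K * Real.exp (-(x ^ 2 / (2 * B * (1 + δ)))) := by
  set D := Real.exp p * (8 * p) ^ p + 4 ^ p with hD
  set m := M / x ^ p with hm
  have hD0 : 0 < D := by positivity
  have hxp : 0 < x ^ p := by positivity
  have hm0 : 0 ≤ m := by positivity
  have h4p : 1 ≤ (4 : ℝ) ^ p := Real.one_le_rpow (by norm_num) hp.le
  have hδp : 1 ≤ δ ^ (-p) := Real.one_le_rpow_of_pos_of_le_one_of_nonpos hδ hδ1 (by linarith)
  have hδ2p : δ ^ (-(2 * p)) = δ ^ (-p) * δ ^ (-p) := by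
    rw [← Real.rpow_add hδ]; congr 1; ring
  have hδple : δ ^ (-p) ≤ δ ^ (-(2 * p)) := by rw [hδ2p]; nlinarith
  have hδ2p1 : 1 ≤ δ ^ (-(2 * p)) := hδp.trans hδple
  have hC1 : 1 ≤ 4 ^ p + (D + 1) * Real.exp D := by
    have : 0 ≤ (D + 1) * Real.exp D := by positivity
    linarith
  rcases hB.eq_or_lt with rfl | hBpos
  · have h0 : 0 ≤ (4 ^ p + (D + 1) * Real.exp D) * δ ^ (-(2 * p)) * K * m := by positivity
    simp only [mul_zero, zero_mul, div_zero, neg_zero, Real.exp_zero, mul_one]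
    linarith
  rcases le_or_gt 1 (δ ^ (-(2 * p)) * m) with hbig | hsmall
  · have h1 : 1 ≤ (4 ^ p + (D + 1) * Real.exp D) * K * (δ ^ (-(2 * p)) * m) :=
      one_le_mul_of_one_le_of_one_le (one_le_mul_of_one_le_of_one_le hC1 hK) hbig
    have h2 : 0 ≤ K * Real.exp (-(x ^ 2 / (2 * B * (1 + δ)))) := by positivity
    linarith
  have hm1 : m < 1 := by nlinarith
  have bound : ∀ t, 0 < t → V ≤ 4 ^ p * m + K * Real.exp (-(t * x) + ((1 + δ) / 2 * t ^ 2 * B +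
      D * δ ^ (-p) * (m * Real.exp (t * x / 4)))) := fun t ht => by
    refine (h t ht).trans ?_
    have e1 : M / (x / 4) ^ p = 4 ^ p * m := by
      rw [Real.div_rpow hx.le (by norm_num), hm]; field_simp
    have e2 : (Real.exp p * (t / (δ / 2)) ^ p + Real.exp (t * (x / 4)) / (x / 4) ^ p) * M =
        (Real.exp p * (t * x / (δ / 2)) ^ p + Real.exp (t * x / 4) * 4 ^ p) * m := by
      rw [Real.div_rpow hx.le (by norm_num), hm, mul_div_right_comm t x,
        Real.mul_rpow (by positivity) hx.le, mul_div_assoc]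
      field_simp
    rw [e1, e2]
    gcongr _ + K * Real.exp (_ + (_ + ?_))
    exact Real.truncation_remainder_le hp hδ hδ1 hm0 (by positivity)
  have small : ∀ L, m ^ 2 * Real.exp L ≤ 1 →
      D * δ ^ (-p) * (m * Real.exp (L / 4)) ≤ D := fun L hL => by
    have e : (m * Real.exp (L / 4)) ^ 4 = m ^ 2 * (m ^ 2 * Real.exp L) := by
      have : Real.exp L = Real.exp (L / 4) ^ 4 := by
        rw [← Real.exp_nat_mul]; congr 1; push_cast; ring
      rw [this]; ring
    have h1 : (m * Real.exp (L / 4)) ^ 4 ≤ m ^ 2 := by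
      rw [e]; exact mul_le_of_le_one_right (sq_nonneg m) hL
    have h2 : (m * Real.exp (L / 4)) ^ 2 ≤ m := by
      refine (sq_le_sq₀ (by positivity) hm0).1 ?_
      rw [← pow_mul]; exact h1
    have h3 : (δ ^ (-p) * (m * Real.exp (L / 4))) ^ 2 ≤ 1 := by
      rw [mul_pow, sq (δ ^ (-p)), ← hδ2p]
      exact (mul_le_mul_of_nonneg_left h2 (by positivity)).trans hsmall.le
    have h4 : δ ^ (-p) * (m * Real.exp (L / 4)) ≤ 1 :=
      (sq_le_one_iff₀ (by positivity)).1 h3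
    rw [mul_assoc]
    exact mul_le_of_le_one_right hD0.le h4
  set Λ := x ^ 2 / (B * (1 + δ)) with hΛ
  have hΛ2 : x ^ 2 / (2 * B * (1 + δ)) = Λ / 2 := by rw [hΛ]; field_simp
  have hm_le : m ≤ δ ^ (-(2 * p)) * m := le_mul_of_one_le_left hm0 hδ2p1
  rw [hΛ2]
  rcases le_or_gt (m ^ 2 * Real.exp Λ) 1 with hle | hgt
  · have htx : x / (B * (1 + δ)) * x = Λ := by rw [hΛ]; ring
    have h1 := bound (x / (B * (1 + δ))) (by positivity)
    have e1 : (1 + δ) / 2 * (x / (B * (1 + δ))) ^ 2 * B = Λ / 2 := by rw [hΛ]; field_simp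
    rw [htx, e1] at h1
    set a := D * δ ^ (-p) * (m * Real.exp (Λ / 4)) with ha
    have ha0 : 0 ≤ a := by positivity
    have haD : a ≤ D := small Λ hle
    have hexp : Real.exp a ≤ 1 + a * Real.exp D := by
      have h2 := Real.add_one_le_exp (-a)
      have h3 : Real.exp a * Real.exp (-a) = 1 := by rw [← Real.exp_add]; simp
      have h4 := mul_le_mul_of_nonneg_left h2 (Real.exp_pos a).le
      have h5 := mul_le_mul_of_nonneg_left (Real.exp_le_exp.2 haD) ha0
      linarith
    have hae : Real.exp (-(Λ / 2)) * a ≤ D * (δ ^ (-(2 * p)) * m) := by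
      have h2 : Real.exp (-(Λ / 2)) * Real.exp (Λ / 4) ≤ 1 := by
        rw [← Real.exp_add]
        refine Real.exp_le_one_iff.2 ?_
        have : 0 ≤ Λ := by positivity
        linarith
      calc Real.exp (-(Λ / 2)) * a
          = D * δ ^ (-p) * m * (Real.exp (-(Λ / 2)) * Real.exp (Λ / 4)) := by rw [ha]; ring
        _ ≤ D * δ ^ (-p) * m := mul_le_of_le_one_right (by positivity) h2
        _ ≤ D * δ ^ (-(2 * p)) * m := by gcongr
        _ = _ := by ring
    have e2 : Real.exp (-Λ + (Λ / 2 + a)) = Real.exp (-(Λ / 2)) * Real.exp a := by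
      rw [← Real.exp_add]; congr 1; ring
    rw [e2] at h1
    calc V ≤ 4 ^ p * m + K * (Real.exp (-(Λ / 2)) * Real.exp a) := h1
      _ ≤ 4 ^ p * m + K * (Real.exp (-(Λ / 2)) * (1 + a * Real.exp D)) := by gcongr
      _ = 4 ^ p * m + K * ((Real.exp (-(Λ / 2)) * a) * Real.exp D) +
          K * Real.exp (-(Λ / 2)) := by ring
      _ ≤ 4 ^ p * (K * (δ ^ (-(2 * p)) * m)) +
          K * (((D + 1) * (δ ^ (-(2 * p)) * m)) * Real.exp D) + K * Real.exp (-(Λ / 2)) := by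
        gcongr 4 ^ p * ?_ + K * (?_ * Real.exp D) + _
        · exact hm_le.trans (le_mul_of_one_le_left (by positivity) hK)
        · exact hae.trans (by gcongr; linarith)
      _ = _ := by ring
  · have hmpos : 0 < m := by
      rcases hm0.eq_or_lt with h0 | h0
      · rw [← h0] at hgt; norm_num at hgt
      · exact h0
    set L := -2 * Real.log m with hL
    have hexpL : m ^ 2 * Real.exp L = 1 := by
      have : Real.exp L = (m ^ 2)⁻¹ := by
        rw [hL, neg_mul, Real.exp_neg, ← Real.exp_log hmpos, ← Real.exp_nat_mul, Real.log_exp]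
        norm_num
      rw [this]; field_simp
    have hL0 : 0 < L := by
      have := Real.log_neg hmpos hm1
      rw [hL]; linarith
    have hLΛ : L ≤ Λ := by
      rw [← hexpL] at hgt
      exact (Real.exp_lt_exp.1 (lt_of_mul_lt_mul_left hgt (sq_nonneg m))).le
    have h1 := bound (L / x) (by positivity)
    have e1 : L / x * x = L := by field_simp
    have e2 : (1 + δ) / 2 * (L / x) ^ 2 * B ≤ L / 2 := by
      have : (1 + δ) / 2 * (L / x) ^ 2 * B = L / 2 * (L / Λ) := by rw [hΛ]; field_simp
      rw [this]
      exact mul_le_of_le_one_right (by positivity) ((div_le_one (hL0.trans_le hLΛ)).2 hLΛ)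
    rw [e1] at h1
    have hem : Real.exp (-L + (L / 2 + D)) = m * Real.exp D := by
      have : -L + (L / 2 + D) = Real.log m + D := by rw [hL]; ring
      rw [this, Real.exp_add, Real.exp_log hmpos]
    have hrest : 0 ≤ K * Real.exp (-(Λ / 2)) := by positivity
    calc V ≤ _ := h1
      _ ≤ 4 ^ p * m + K * Real.exp (-L + (L / 2 + D)) := by
        gcongr
        exact small L hexpL.le
      _ = 4 ^ p * m + K * (m * Real.exp D) := by rw [hem]
      _ ≤ 4 ^ p * (K * (δ ^ (-(2 * p)) * m)) +
          K * (((D + 1) * (δ ^ (-(2 * p)) * m)) * Real.exp D) := by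
        gcongr
        · exact hm_le.trans (le_mul_of_one_le_left (by positivity) hK)
        · exact hm_le.trans (le_mul_of_one_le_left (by positivity) (by linarith))
      _ = (4 ^ p + (D + 1) * Real.exp D) * δ ^ (-(2 * p)) * K * m := by ring
      _ ≤ _ := le_add_of_nonneg_right hrest

/-- Theorem 3.1(b): moment/exponential inequality; the constant `C_p ≥ 1`
depends only on `p`. -/
theorem stmt1 (p : ℝ) (hp : 2 ≤ p) :
    ∃ C : ℝ, 1 ≤ C ∧
      ∀ (Ω : Type) (SL : SublinearExp Ω) (n : ℕ) (X : Fin n → Ω → ℝ) (K : ℝ),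
        1 ≤ K →
        SublinearExp.UENDFin SL K X →
        (∀ k, SL.E (X k) ≤ 0) →
        ∀ B M : ℝ,
          (B : EReal) = (∑ k, SL.E fun ω => (X k ω) ^ 2) →
          (M : EReal) = (∑ k, SL.E fun ω => (max (X k ω) 0) ^ p) →
          ∀ x δ : ℝ, 0 < x → 0 < δ → δ ≤ 1 →
            SL.V {ω | x ≤ ∑ k, X k ω} ≤
              C * δ ^ (-(2 * p)) * K * (M / x ^ p) +
                K * Real.exp (-(x ^ 2 / (2 * B * (1 + δ)))) := by
  have hp0 : 0 < p := by linarith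
  refine ⟨4 ^ p + ((Real.exp p * (8 * p) ^ p + 4 ^ p) + 1) *
    Real.exp (Real.exp p * (8 * p) ^ p + 4 ^ p), ?_, ?_⟩
  · have h4p : 1 ≤ (4 : ℝ) ^ p := Real.one_le_rpow (by norm_num) hp0.le
    exact h4p.trans (le_add_of_nonneg_right (by positivity))
  · intro Ω SL n X K hK hU hX B M hB hM x δ hx hδ hδ1
    obtain ⟨b, hb, hb0, rfl⟩ := EReal.exists_real_of_sum_eq_coe
      (fun k _ => SL.E_nonneg fun ω => sq_nonneg (X k ω)) hB
    obtain ⟨m, hm, hm0, rfl⟩ := EReal.exists_real_of_sum_eq_coe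
      (fun k _ => SL.E_nonneg fun ω => Real.rpow_nonneg (le_max_right (X k ω) 0) p) hM
    refine Real.le_of_forall_truncated_exp_bound hp0 hδ hδ1 hK (Finset.sum_nonneg hb0)
      (Finset.sum_nonneg hm0) hx (SL.V_le_one _) fun t ht => ?_
    exact SL.V_sum_ge_le hp0.le hδ hδ1 ht (by positivity) (by linarith) hU hX
      (fun k => (hb k (Finset.mem_univ k)).le) (fun k => (hm k (Finset.mem_univ k)).le)
      rfl rfl x
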